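/- The tangent-point energy E is sequentially lower semicontinuous on 𝓜 with respect to weak convergence in H^s(𝕋,ℝⁿ): if γ_k ∈ 𝓜 for all k, γ ∈ 𝓜, and γ_k converges weakly to γ in H^s(𝕋,ℝⁿ), then E(γ) ≤ liminf_{k→∞} E(γ_k). Likewise, E is sequentially lower semicontinuous on 𝓜 with respect to convergence in C¹(𝕋,ℝⁿ). -/

import Mathlib

open MeasureTheory Real Filter Set
open scoped ENNReal Topology RealInnerProductSpace

noncomputable section

/-- Euclidean space `ℝⁿ`. -/
abbrev En (n : ℕ) : Type := EuclideanSpace ℝ (Fin n)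

/-- A fundamental domain for the circle `𝕋 = ℝ/ℤ`. -/
def I01 : Set ℝ := Set.Ico (0 : ℝ) 1

/-- The intrinsic distance on `𝕋 = ℝ/ℤ`, expressed for real representatives. -/
def dT (x y : ℝ) : ℝ := ⨅ k : ℤ, |x - y - (k : ℝ)|

/-- Supremum norm of a (periodic) function on the circle. -/
def supNorm {E : Type*} [NormedAddCommGroup E] (f : ℝ → E) : ℝ := ⨆ x : ℝ, ‖f x‖

/-- The squared Gagliardo seminorm `[v]_{H^σ}²` of a function on the circle, valued in `[0,∞]`. -/
def gagliardoSqE {E : Type*} [NormedAddCommGroup E] (σ : ℝ) (v : ℝ → E) : ℝ≥0∞ :=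
  ∫⁻ x in I01, ∫⁻ y in I01, ENNReal.ofReal (‖v y - v x‖ ^ 2 / dT x y ^ (2 * σ + 1))

/-- Membership in the Sobolev–Slobodeckij space `H^s(𝕋, ℝⁿ)`; for `s ∈ (3/2,2)` such
functions have a `C¹` representative, which we take as the defining data. -/
def InHs {n : ℕ} (s : ℝ) (u : ℝ → En n) : Prop :=
  Function.Periodic u 1 ∧ ContDiff ℝ 1 u ∧ gagliardoSqE (s - 1) (deriv u) < ⊤

/-- The squared `H^s` norm `‖u‖²_{L²} + ‖u'‖²_{L²} + [u']²_{H^{s-1}}`. -/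
def HsNormSq {n : ℕ} (s : ℝ) (u : ℝ → En n) : ℝ :=
  (∫ x in I01, ‖u x‖ ^ 2) + (∫ x in I01, ‖deriv u x‖ ^ 2) +
    (gagliardoSqE (s - 1) (deriv u)).toReal

/-- The `H^s` norm. -/
def HsNorm {n : ℕ} (s : ℝ) (u : ℝ → En n) : ℝ := Real.sqrt (HsNormSq s u)

/-- The `H^s` inner product. -/
def HsInner {n : ℕ} (s : ℝ) (u v : ℝ → En n) : ℝ :=
  (∫ x in I01, ⟪u x, v x⟫) + (∫ x in I01, ⟪deriv u x, deriv v x⟫) +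
    ∫ x in I01, ∫ y in I01,
      ⟪deriv u y - deriv u x, deriv v y - deriv v x⟫ / dT x y ^ (2 * (s - 1) + 1)

/-- The manifold `𝓜` of embedded closed curves of class `H^s`: injective (on the circle)
immersions. -/
def InM {n : ℕ} (s : ℝ) (γ : ℝ → En n) : Prop :=
  InHs s γ ∧ Set.InjOn γ I01 ∧ ∀ x, deriv γ x ≠ 0

/-- The length `L(γ)`. -/
def arcLen {n : ℕ} (γ : ℝ → En n) : ℝ := ∫ x in I01, ‖deriv γ x‖

/-- The arc-length distance `d_γ(x,y)`: the length of the shorter of the two arcs of `γ`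
between `x` and `y`. -/
def arcDist {n : ℕ} (γ : ℝ → En n) (x y : ℝ) : ℝ :=
  ⨅ k : ℤ, |∫ t in x..(y + (k : ℝ)), ‖deriv γ t‖|

/-- Derivative with respect to arc length, `D_γ u = u' / |γ'|`. -/
def Dg {n : ℕ} (γ u : ℝ → En n) (x : ℝ) : En n := ‖deriv γ x‖⁻¹ • deriv u x

/-- `𝒟_γ u (x)`, the pointwise linear map `w ↦ |γ'(x)|⁻² ⟪γ'(x), w⟫ u'(x)`. -/
def DDg {n : ℕ} (γ u : ℝ → En n) (x : ℝ) (w : En n) : En n :=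
  ((‖deriv γ x‖ ^ 2)⁻¹ * ⟪deriv γ x, w⟫) • deriv u x

/-- The operator `R^s_γ`. -/
def Rop {n : ℕ} (s : ℝ) (γ u : ℝ → En n) (x y : ℝ) : En n :=
  (‖γ y - γ x‖ ^ s)⁻¹ • (u y - u x - DDg γ u x (γ y - γ x))

/-- Density of the measure `μ_γ` with respect to `λ ⊗ λ` on `𝕋 × 𝕋`. -/
def muW {n : ℕ} (γ : ℝ → En n) (x y : ℝ) : ℝ :=
  ‖deriv γ x‖ * ‖deriv γ y‖ / ‖γ y - γ x‖

/-- Density of the measure `ν_γ` with respect to `λ ⊗ λ` on `𝕋 × 𝕋`. -/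
def nuW {n : ℕ} (γ : ℝ → En n) (x y : ℝ) : ℝ :=
  ‖deriv γ x‖ * ‖deriv γ y‖ / arcDist γ x y

/-- The tangent-point energy, valued in `[0,∞]`. -/
def EtpE {n : ℕ} (s : ℝ) (γ : ℝ → En n) : ℝ≥0∞ :=
  ∫⁻ x in I01, ∫⁻ y in I01, ENNReal.ofReal (‖Rop s γ γ x y‖ ^ 2 * muW γ x y)

/-- The tangent-point energy, real-valued (finite on `𝓜`). -/
def Etp {n : ℕ} (s : ℝ) (γ : ℝ → En n) : ℝ := (EtpE s γ).toReal

/-- `‖R^s_γ u‖²_{L²(ν_γ)}`, valued in `[0,∞]`. -/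
def RnuSqE {n : ℕ} (s : ℝ) (γ u : ℝ → En n) : ℝ≥0∞ :=
  ∫⁻ x in I01, ∫⁻ y in I01, ENNReal.ofReal (‖Rop s γ u x y‖ ^ 2 * nuW γ x y)

/-- `‖R^s_γ u‖²_{L²(ν_γ)}`, real-valued. -/
def RnuSq {n : ℕ} (s : ℝ) (γ u : ℝ → En n) : ℝ := (RnuSqE s γ u).toReal

/-- The squared `γ`-dependent seminorm `[u]²_{H^s(γ)}`, valued in `[0,∞]`. -/
def gagGammaSqE {n : ℕ} (s : ℝ) (γ u : ℝ → En n) : ℝ≥0∞ :=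
  ∫⁻ x in I01, ∫⁻ y in I01,
    ENNReal.ofReal (‖Dg γ u y - Dg γ u x‖ ^ 2 / arcDist γ x y ^ (2 * (s - 1)) * nuW γ x y)

/-- The squared `γ`-dependent seminorm `[u]²_{H^s(γ)}`, real-valued. -/
def gagGammaSq {n : ℕ} (s : ℝ) (γ u : ℝ → En n) : ℝ := (gagGammaSqE s γ u).toReal

/-- The inner product `⟨u,v⟩_{L²(γ)}`. -/
def innerL2g {n : ℕ} (γ u v : ℝ → En n) : ℝ := ∫ x in I01, ⟪u x, v x⟫ * ‖deriv γ x‖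

/-- The inner product `⟨u,v⟩_{H¹(γ)}`. -/
def innerH1g {n : ℕ} (γ u v : ℝ → En n) : ℝ :=
  ∫ x in I01, ⟪Dg γ u x, Dg γ v x⟫ * ‖deriv γ x‖

/-- The squared `γ`-dependent norm `‖u‖²_{H^s(γ)}`. -/
def HsGammaNormSq {n : ℕ} (s : ℝ) (γ u : ℝ → En n) : ℝ :=
  innerL2g γ u u + innerH1g γ u u + gagGammaSq s γ u

/-- The `γ`-dependent norm `‖u‖_{H^s(γ)}`. -/
def HsGammaNorm {n : ℕ} (s : ℝ) (γ u : ℝ → En n) : ℝ := Real.sqrt (HsGammaNormSq s γ u)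

/-- The bilinear form `B¹_γ`. -/
def B1 {n : ℕ} (s : ℝ) (γ u v : ℝ → En n) : ℝ :=
  ∫ x in I01, ∫ y in I01, ⟪Rop s γ u x y, Rop s γ v x y⟫ * muW γ x y

/-- The bilinear form `B²_γ`. -/
def B2 {n : ℕ} (s : ℝ) (γ u v : ℝ → En n) : ℝ :=
  ∫ x in I01, ∫ y in I01,
    ‖Rop s γ γ x y‖ ^ 2 * (⟪u y - u x, v y - v x⟫ / ‖γ y - γ x‖ ^ 2) * muW γ x y

/-- The bilinear form `B³_γ`. -/
def B3 {n : ℕ} (s : ℝ) (γ u v : ℝ → En n) : ℝ :=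
  ∫ x in I01, ∫ y in I01,
    ‖Rop s γ γ x y‖ ^ 2 * (⟪Dg γ u x, Dg γ v x⟫ + ⟪Dg γ u y, Dg γ v y⟫) * muW γ x y

/-- The Riemannian metric `G_γ(u,v)`. -/
def Gmet {n : ℕ} (s : ℝ) (γ u v : ℝ → En n) : ℝ :=
  2 * B1 s γ u v + (2 * s + 1) * B2 s γ u v + B3 s γ u v + innerH1g γ u v + innerL2g γ u v

/-- The distortion `distor(γ) = sup_{x ≠ y} d_γ(x,y)/|γ(y) − γ(x)|`, valued in `[0,∞]`. -/
def distorE {n : ℕ} (γ : ℝ → En n) : ℝ≥0∞ :=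
  ⨆ (x ∈ I01) (y ∈ I01) (_ : x ≠ y), ENNReal.ofReal (arcDist γ x y / ‖γ y - γ x‖)

/-- The distortion, real-valued. -/
def distor {n : ℕ} (γ : ℝ → En n) : ℝ := (distorE γ).toReal

/-- A `C¹` path `[0,1] → 𝓜 ⊂ H^s(𝕋,ℝⁿ)` (with respect to the `H^s` topology), recorded
together with its velocity field `V`. -/
structure C1Path (s : ℝ) (n : ℕ) where
  Γ : ℝ → ℝ → En n
  V : ℝ → ℝ → En n
  mem : ∀ t ∈ Set.Icc (0 : ℝ) 1, InM s (Γ t)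
  memV : ∀ t ∈ Set.Icc (0 : ℝ) 1, InHs s (V t)
  isDeriv : ∀ t ∈ Set.Icc (0 : ℝ) 1,
    Tendsto (fun h : ℝ => HsNorm s fun x => h⁻¹ • (Γ (t + h) x - Γ t x) - V t x)
      (𝓝[{h : ℝ | t + h ∈ Set.Icc (0 : ℝ) 1 ∧ h ≠ 0}] 0) (𝓝 0)
  contV : ∀ t ∈ Set.Icc (0 : ℝ) 1,
    Tendsto (fun τ : ℝ => HsNorm s fun x => V τ x - V t x) (𝓝[Set.Icc (0 : ℝ) 1] t) (𝓝 0)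

/-- Length of a path with respect to `G`. -/
def pathLen {s : ℝ} {n : ℕ} (P : C1Path s n) : ℝ :=
  ∫ t in (0 : ℝ)..1, Real.sqrt (Gmet s (P.Γ t) (P.V t) (P.V t))

/-- The path (Dirichlet) energy of a path with respect to `G`. -/
def pathEnergy {s : ℝ} {n : ℕ} (P : C1Path s n) : ℝ :=
  (1 / 2) * ∫ t in (0 : ℝ)..1, Gmet s (P.Γ t) (P.V t) (P.V t)

/-- The geodesic distance induced by `G`, valued in `[0,∞]` (`∞` if there is no path). -/
def geodDist (s : ℝ) {n : ℕ} (γ₀ γ₁ : ℝ → En n) : ℝ≥0∞ :=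
  ⨅ (P : C1Path s n) (_ : P.Γ 0 = γ₀ ∧ P.Γ 1 = γ₁), ENNReal.ofReal (pathLen P)

/-- `U ⊆ 𝓜` is bounded with respect to the geodesic distance `d_G`. -/
def GBounded (s : ℝ) {n : ℕ} (U : Set (ℝ → En n)) : Prop :=
  (∀ γ ∈ U, InM s γ) ∧
    ∃ γ₀, InM s γ₀ ∧ ∃ R : ℝ, ∀ γ ∈ U, geodDist s γ γ₀ ≤ ENNReal.ofReal R

/-- Weak convergence in the Hilbert space `H^s(𝕋,ℝⁿ)`. -/
def WeakHsTendsto {n : ℕ} (s : ℝ) (γk : ℕ → ℝ → En n) (γ : ℝ → En n) : Prop :=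
  ∀ v : ℝ → En n, InHs s v →
    Tendsto (fun k => HsInner s (γk k) v) atTop (𝓝 (HsInner s γ v))

/-- Directional derivative of `γ ↦ G_γ(u,v)` at `γ` in direction `w`. -/
def DGdir {n : ℕ} (s : ℝ) (γ w u v : ℝ → En n) : ℝ :=
  deriv (fun t : ℝ => Gmet s (fun x => γ x + t • w x) u v) 0

/-- `F'` is the derivative of the path `F` with respect to the `H^s` norm, on `S`. -/
def IsHsDerivOn {n : ℕ} (s : ℝ) (F F' : ℝ → ℝ → En n) (S : Set ℝ) : Prop :=
  ∀ t ∈ S,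
    Tendsto (fun h : ℝ => HsNorm s fun x => h⁻¹ • (F (t + h) x - F t x) - F' t x)
      (𝓝[{h : ℝ | t + h ∈ S ∧ h ≠ 0}] 0) (𝓝 0)

/-- The path `F` is continuous on `S` with respect to the `H^s` norm. -/
def HsContOn {n : ℕ} (s : ℝ) (F : ℝ → ℝ → En n) (S : Set ℝ) : Prop :=
  ∀ t ∈ S, Tendsto (fun τ : ℝ => HsNorm s fun x => F τ x - F t x) (𝓝[S] t) (𝓝 0)

/-- A solution of the geodesic initial value problem on `[0,∞)`, recorded as a triple
(position `Γ`, velocity `V`, acceleration `W`); the geodesic equation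
`Γ̈ + A_Γ(Γ̇)Γ̇ = 0` is expressed weakly via the Koszul formula for the
Christoffel operator `A`. -/
def GeodesicSol {n : ℕ} (s : ℝ) (γ₀ v₀ : ℝ → En n) (Γ V W : ℝ → ℝ → En n) : Prop :=
  (∀ t ∈ Set.Ici (0 : ℝ), InM s (Γ t) ∧ InHs s (V t) ∧ InHs s (W t)) ∧
  Γ 0 = γ₀ ∧ V 0 = v₀ ∧
  IsHsDerivOn s Γ V (Set.Ici 0) ∧ IsHsDerivOn s V W (Set.Ici 0) ∧
  HsContOn s V (Set.Ici 0) ∧ HsContOn s W (Set.Ici 0) ∧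
  ∀ t ∈ Set.Ici (0 : ℝ), ∀ w : ℝ → En n, InHs s w →
    Gmet s (Γ t) (W t) w + DGdir s (Γ t) (V t) (V t) w
      - (1 / 2) * DGdir s (Γ t) w (V t) (V t) = 0

lemma dT_le (x y : ℝ) : dT x y ≤ |x - y| := by
  unfold dT
  have : BddBelow (Set.range fun k : ℤ => |x - y - (k : ℝ)|) :=
    ⟨0, by rintro _ ⟨k, rfl⟩; positivity⟩
  simpa using ciInf_le this 0

lemma dT_nonneg (x y : ℝ) : 0 ≤ dT x y := Real.iInf_nonneg fun _ => abs_nonneg _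

lemma dT_pos {x y : ℝ} (hx : x ∈ I01) (hy : y ∈ I01) (h : x ≠ y) : 0 < dT x y := by
  obtain ⟨hx0, hx1⟩ := hx
  obtain ⟨hy0, hy1⟩ := hy
  have h1 : |x - y| < 1 := by rw [abs_lt]; constructor <;> linarith
  have h2 : 0 < |x - y| := abs_pos.2 (sub_ne_zero.2 h)
  refine lt_of_lt_of_le (lt_min h2 (sub_pos.2 h1)) (le_ciInf fun k => ?_)
  rcases eq_or_ne k 0 with rfl | hk
  · simp
  · refine (min_le_right _ _).trans ?_
    have hk1 : (1 : ℝ) ≤ |(k : ℝ)| := by exact_mod_cast Int.one_le_abs hk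
    have := abs_sub_abs_le_abs_sub (k : ℝ) (x - y)
    rw [abs_sub_comm (k : ℝ) (x - y)] at this
    linarith

lemma measurable_dT : Measurable (fun z : ℝ × ℝ => dT z.1 z.2) := by
  unfold dT
  refine Measurable.iInf fun k => ?_
  fun_prop

lemma fatou_gen (F : ℕ → ℝ → ℝ → ℝ≥0∞) (G : ℝ → ℝ → ℝ≥0∞)
    (hm : ∀ k, Measurable (fun z : ℝ × ℝ => F k z.1 z.2))
    (h : ∀ x ∈ I01, ∀ y ∈ I01, y ≠ x → Tendsto (fun k => F k x y) atTop (𝓝 (G x y))) :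
    ∫⁻ x in I01, ∫⁻ y in I01, G x y ≤
      liminf (fun k => ∫⁻ x in I01, ∫⁻ y in I01, F k x y) atTop := by
  have m1 : ∀ k, Measurable fun x => ∫⁻ y in I01, F k x y := fun k =>
    (hm k).lintegral_prod_right'
  have m2 : ∀ x k, Measurable fun y => F k x y := fun x k => (hm k).comp measurable_prodMk_left
  refine le_trans ?_ (lintegral_liminf_le m1)
  refine setLIntegral_mono' measurableSet_Ico fun x hx => ?_
  refine le_trans ?_ (lintegral_liminf_le (m2 x))
  refine lintegral_mono_ae ?_
  have hne : ∀ᵐ y ∂(volume.restrict I01), y ≠ x :=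
    ae_restrict_of_ae (Measure.ae_ne volume x)
  filter_upwards [hne, ae_restrict_mem measurableSet_Ico] with y hy hyI
  exact le_of_eq (h x hx y hyI hy).liminf_eq.symm

lemma fatou_main {n : ℕ} (s : ℝ) (γk : ℕ → ℝ → En n) (γ : ℝ → En n)
    (hk : ∀ k, InM s (γk k)) (hγ : InM s γ)
    (h0 : ∀ x, Tendsto (fun k => γk k x) atTop (𝓝 (γ x)))
    (h1 : ∀ x, Tendsto (fun k => deriv (γk k) x) atTop (𝓝 (deriv γ x))) :
    EtpE s γ ≤ Filter.liminf (fun k => EtpE s (γk k)) atTop := by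
  refine fatou_gen (fun k x y => ENNReal.ofReal (‖Rop s (γk k) (γk k) x y‖ ^ 2 * muW (γk k) x y))
    _ ?_ ?_
  · intro k
    have c0 : Measurable (γk k) := (hk k).1.2.1.continuous.measurable
    have c1 : Measurable (deriv (γk k)) := measurable_deriv _
    unfold Rop muW DDg
    fun_prop
  intro x hx y hyI hy
  refine (ENNReal.continuous_ofReal.tendsto _).comp ?_
  have hd : ‖γ y - γ x‖ ≠ 0 := by
    rw [norm_ne_zero_iff, sub_ne_zero]
    exact fun h => hy (hγ.2.1 hyI hx h)
  have hd' : ‖deriv γ x‖ ^ 2 ≠ 0 := pow_ne_zero _ (norm_ne_zero_iff.2 (hγ.2.2 x))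
  have hs' : ‖γ y - γ x‖ ^ s ≠ 0 := (Real.rpow_pos_of_pos (lt_of_le_of_ne (norm_nonneg _) hd.symm) s).ne'
  have t1 : Tendsto (fun k => γk k y - γk k x) atTop (𝓝 (γ y - γ x)) := (h0 y).sub (h0 x)
  unfold Rop muW DDg
  refine Tendsto.mul (Tendsto.pow (Tendsto.norm ?_) 2) ?_
  · refine Tendsto.smul ((t1.norm.rpow_const (Or.inl hd)).inv₀ hs') (t1.sub ?_)
    exact ((((h1 x).norm.pow 2).inv₀ hd').mul ((h1 x).inner t1)).smul (h1 x)
  · exact ((h1 x).norm.mul (h1 y).norm).div t1.norm hd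

lemma periodic_deriv' {n : ℕ} {u : ℝ → En n} (h : Function.Periodic u 1) :
    Function.Periodic (deriv u) 1 := by
  intro x
  have : (fun y => u (y + 1)) = u := funext h
  rw [← deriv_comp_add_const, this]

lemma le_supNorm {n : ℕ} {f : ℝ → En n} (h : Function.Periodic f 1) (hc : Continuous f) (x : ℝ) :
    ‖f x‖ ≤ supNorm f := by
  have hb := h.isBounded_of_continuous one_ne_zero hc
  obtain ⟨C, hC⟩ := hb.exists_norm_le
  exact le_ciSup (f := fun x => ‖f x‖)
    ⟨C, by rintro _ ⟨y, rfl⟩; exact hC _ ⟨y, rfl⟩⟩ x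

lemma part_C1 {n : ℕ} (s : ℝ) (γk : ℕ → ℝ → En n) (γ : ℝ → En n)
    (hk : ∀ k, InM s (γk k)) (hγ : InM s γ)
    (h : Tendsto (fun k => supNorm (fun x => γk k x - γ x) +
        supNorm (fun x => deriv (γk k) x - deriv γ x)) atTop (𝓝 0)) :
    EtpE s γ ≤ Filter.liminf (fun k => EtpE s (γk k)) atTop := by
  have b0 : ∀ k x, ‖γk k x - γ x‖ ≤ supNorm (fun x => γk k x - γ x) := fun k x =>
    le_supNorm (f := fun x => γk k x - γ x) ((hk k).1.1.sub hγ.1.1)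
      ((hk k).1.2.1.continuous.sub hγ.1.2.1.continuous) x
  have b1 : ∀ k x, ‖deriv (γk k) x - deriv γ x‖ ≤ supNorm (fun x => deriv (γk k) x - deriv γ x) :=
    fun k x => le_supNorm (f := fun x => deriv (γk k) x - deriv γ x)
      ((periodic_deriv' (hk k).1.1).sub (periodic_deriv' hγ.1.1))
      (((hk k).1.2.1.continuous_deriv le_rfl).sub (hγ.1.2.1.continuous_deriv le_rfl)) x
  have p0 : ∀ k, 0 ≤ supNorm (fun x => γk k x - γ x) := fun k => (norm_nonneg _).trans (b0 k 0)
  have p1 : ∀ k, 0 ≤ supNorm (fun x => deriv (γk k) x - deriv γ x) :=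
    fun k => (norm_nonneg _).trans (b1 k 0)
  refine fatou_main s γk γ hk hγ (fun x => ?_) (fun x => ?_)
  · exact tendsto_iff_norm_sub_tendsto_zero.2 (squeeze_zero (fun _ => norm_nonneg _)
      (fun k => (b0 k x).trans (by linarith [p1 k])) h)
  · exact tendsto_iff_norm_sub_tendsto_zero.2 (squeeze_zero (fun _ => norm_nonneg _)
      (fun k => (b1 k x).trans (by linarith [p0 k])) h)

def muI : Measure (ℝ × ℝ) := (volume.restrict I01).prod (volume.restrict I01)

instance : IsProbabilityMeasure (volume.restrict I01 : Measure ℝ) :=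
  ⟨by simp [I01]⟩

instance : IsProbabilityMeasure muI := by unfold muI; infer_instance

lemma cs_int {α E : Type*} [MeasurableSpace α] [NormedAddCommGroup E] [NormedSpace ℝ E]
    (ν : Measure α) [IsFiniteMeasure ν]
    (f : α → E) (hf : Integrable f ν) (hf2 : Integrable (fun z => ‖f z‖ ^ 2) ν) :
    ‖∫ z, f z ∂ν‖ ^ 2 ≤ ν.real univ * ∫ z, ‖f z‖ ^ 2 ∂ν := by
  rcases eq_or_ne ν 0 with rfl | hν
  · simp
  have hc : 0 < ν.real univ := by
    rw [measureReal_def]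
    exact ENNReal.toReal_pos (by simpa using hν) (measure_ne_top _ _)
  set c := ν.real univ with hcdef
  set m := ∫ z, ‖f z‖ ∂ν with hm
  have h1 : ‖∫ z, f z ∂ν‖ ≤ m := norm_integral_le_integral_norm _
  have h2 : 0 ≤ ∫ z, (c * ‖f z‖ - m) ^ 2 ∂ν := integral_nonneg fun _ => sq_nonneg _
  have h3 : ∫ z, (c * ‖f z‖ - m) ^ 2 ∂ν = c ^ 2 * (∫ z, ‖f z‖ ^ 2 ∂ν) - 2 * c * m * m + m ^ 2 * c := by
    have : ∀ z, (c * ‖f z‖ - m) ^ 2 = c ^ 2 * ‖f z‖ ^ 2 - 2 * c * m * ‖f z‖ + m ^ 2 := fun z => by ring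
    simp_rw [this]
    have i1 : Integrable (fun z => c ^ 2 * ‖f z‖ ^ 2 - 2 * c * m * ‖f z‖) ν :=
      (hf2.const_mul _).sub (hf.norm.const_mul _)
    rw [integral_add i1 (integrable_const _),
      integral_sub (hf2.const_mul _) (hf.norm.const_mul _), integral_const_mul, integral_const_mul,
      integral_const, smul_eq_mul]
    rw [← hm, ← hcdef]; ring
  have h4 : 0 ≤ c * (c * (∫ z, ‖f z‖ ^ 2 ∂ν) - m ^ 2) := by rw [h3] at h2; linarith
  have h5 := nonneg_of_mul_nonneg_right h4 hc
  have h6 : ‖∫ z, f z ∂ν‖ ^ 2 ≤ m ^ 2 := pow_le_pow_left₀ (norm_nonneg _) h1 2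
  linarith

lemma cont_intOn {E : Type*} [NormedAddCommGroup E] {f : ℝ → E} (hf : Continuous f) {J : Set ℝ}
    (hJ : J ⊆ I01) : IntegrableOn f J :=
  (hf.integrableOn_Icc (a := 0) (b := 1)).mono_set (hJ.trans Ico_subset_Icc_self)

lemma cont_intOn2 {E : Type*} [NormedAddCommGroup E] {f : ℝ × ℝ → E} (hf : Continuous f)
    {J J' : Set ℝ} (hJ : J ⊆ I01) (hJ' : J' ⊆ I01) :
    Integrable f ((volume.restrict J).prod (volume.restrict J')) := by
  rw [Measure.prod_restrict]
  have : IntegrableOn f (Icc (0 : ℝ) 1 ×ˢ Icc (0 : ℝ) 1) (volume.prod volume) := by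
    rw [← Measure.volume_eq_prod]
    exact hf.continuousOn.integrableOn_compact (isCompact_Icc.prod isCompact_Icc)
  exact this.mono_set (Set.prod_mono (hJ.trans Ico_subset_Icc_self) (hJ'.trans Ico_subset_Icc_self))

lemma avg_diff {n : ℕ} {v : ℝ → En n} (hv : Continuous v) {p : ℝ} (hp : 0 ≤ p)
    (hg : Integrable (fun z : ℝ × ℝ => ‖v z.2 - v z.1‖ ^ 2 / dT z.1 z.2 ^ p) muI)
    {J J' : Set ℝ} (hJ : J ⊆ I01) (hJ' : J' ⊆ I01) (mJ : MeasurableSet J) (mJ' : MeasurableSet J')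
    {a b L : ℝ} (ha : 0 < a) (hb : 0 < b) (hJa : volume.real J = a) (hJb : volume.real J' = b)
    (hL : ∀ x ∈ J, ∀ y ∈ J', |x - y| ≤ L) :
    ‖a⁻¹ • (∫ x in J, v x) - b⁻¹ • ∫ x in J', v x‖ ^ 2 ≤
      L ^ p / (a * b) * ∫ z, ‖v z.2 - v z.1‖ ^ 2 / dT z.1 z.2 ^ p ∂muI := by
  set G := ∫ z, ‖v z.2 - v z.1‖ ^ 2 / dT z.1 z.2 ^ p ∂muI with hG
  have f1 : IsFiniteMeasure (volume.restrict J) :=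
    isFiniteMeasure_of_le (volume.restrict I01) (Measure.restrict_mono hJ le_rfl)
  have f2 : IsFiniteMeasure (volume.restrict J') :=
    isFiniteMeasure_of_le (volume.restrict I01) (Measure.restrict_mono hJ' le_rfl)
  set ν := (volume.restrict J).prod (volume.restrict J') with hν
  have hνle : ν ≤ muI := by
    rw [hν, muI, Measure.prod_restrict, Measure.prod_restrict]
    exact Measure.restrict_mono (Set.prod_mono hJ hJ') le_rfl
  have hνm : ∀ᵐ z ∂ν, z ∈ J ×ˢ J' := by
    rw [hν, Measure.prod_restrict]
    exact ae_restrict_mem (mJ.prod mJ')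
  have hνu : ν.real univ = a * b := by
    rw [hν, ← univ_prod_univ, measureReal_prod_prod]
    simp [hJa, hJb]
  have e1 : ∫ z, (v z.2 - v z.1) ∂ν = (a * b) • (b⁻¹ • (∫ x in J', v x) - a⁻¹ • ∫ x in J, v x) := by
    have i1 : Integrable (fun z : ℝ × ℝ => v z.2) ν := cont_intOn2 (by fun_prop) hJ hJ'
    have i2 : Integrable (fun z : ℝ × ℝ => v z.1) ν := cont_intOn2 (by fun_prop) hJ hJ'
    rw [integral_sub i1 i2, hν, integral_fun_fst, integral_fun_snd]
    simp only [measureReal_restrict_apply_univ, hJa, hJb, smul_sub, smul_smul]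
    congr 2 <;> field_simp
  have c2 : Continuous fun z : ℝ × ℝ => v z.2 - v z.1 := by fun_prop
  have i2 : Integrable (fun z : ℝ × ℝ => ‖v z.2 - v z.1‖ ^ 2) ν :=
    cont_intOn2 (c2.norm.pow 2) hJ hJ'
  have e2 := cs_int ν (fun z : ℝ × ℝ => v z.2 - v z.1) (cont_intOn2 c2 hJ hJ') i2
  have gnn : ∀ z : ℝ × ℝ, 0 ≤ ‖v z.2 - v z.1‖ ^ 2 / dT z.1 z.2 ^ p := fun z =>
    div_nonneg (sq_nonneg _) (Real.rpow_nonneg (dT_nonneg _ _) _)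
  have hJne : J.Nonempty := by
    by_contra h
    rw [not_nonempty_iff_eq_empty] at h
    rw [h] at hJa; simp at hJa; linarith
  have hJne' : J'.Nonempty := by
    by_contra h
    rw [not_nonempty_iff_eq_empty] at h
    rw [h] at hJb; simp at hJb; linarith
  have hL0 : 0 ≤ L := by
    obtain ⟨x, hx⟩ := hJne
    obtain ⟨y, hy⟩ := hJne'
    exact (abs_nonneg _).trans (hL x hx y hy)
  have e3 : ∫ z, ‖v z.2 - v z.1‖ ^ 2 ∂ν ≤ L ^ p * G := by
    calc ∫ z, ‖v z.2 - v z.1‖ ^ 2 ∂ν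
        ≤ ∫ z, L ^ p * (‖v z.2 - v z.1‖ ^ 2 / dT z.1 z.2 ^ p) ∂ν := by
          refine integral_mono_ae i2 ((hg.mono_measure hνle).const_mul _) ?_
          filter_upwards [hνm] with z hz
          rcases eq_or_ne z.1 z.2 with h | h
          · simp [h]
          · have hd := dT_pos (hJ hz.1) (hJ' hz.2) h
            have hd2 : dT z.1 z.2 ^ p ≤ L ^ p :=
              Real.rpow_le_rpow hd.le ((dT_le _ _).trans (hL _ hz.1 _ hz.2)) hp
            have hd3 : 0 < dT z.1 z.2 ^ p := Real.rpow_pos_of_pos hd p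
            have : L ^ p * (‖v z.2 - v z.1‖ ^ 2 / dT z.1 z.2 ^ p) =
              (L ^ p / dT z.1 z.2 ^ p) * ‖v z.2 - v z.1‖ ^ 2 := by ring
            simp only [this]
            exact le_mul_of_one_le_left (sq_nonneg _) ((one_le_div hd3).2 hd2)
      _ = L ^ p * ∫ z, (‖v z.2 - v z.1‖ ^ 2 / dT z.1 z.2 ^ p) ∂ν := integral_const_mul _ _
      _ ≤ L ^ p * G := by
          refine mul_le_mul_of_nonneg_left ?_ (Real.rpow_nonneg hL0 _)
          exact integral_mono_measure hνle (Eventually.of_forall gnn) hg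
  rw [e1, hνu, norm_smul, Real.norm_eq_abs, abs_of_pos (mul_pos ha hb), mul_pow, norm_sub_rev] at e2
  have hab : 0 < a * b := mul_pos ha hb
  rw [div_mul_eq_mul_div, le_div_iff₀ hab]
  have e4 : (a * b) * ((a * b) * ‖a⁻¹ • (∫ x in J, v x) - b⁻¹ • ∫ x in J', v x‖ ^ 2) ≤ (a * b) * (L ^ p * G) := by
    calc _ = (a * b) ^ 2 * ‖a⁻¹ • (∫ x in J, v x) - b⁻¹ • ∫ x in J', v x‖ ^ 2 := by ring
      _ ≤ _ := e2.trans (mul_le_mul_of_nonneg_left e3 hab.le)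
  have := le_of_mul_le_mul_left e4 hab
  linarith

lemma morrey_one {n : ℕ} {v : ℝ → En n} (hv : Continuous v) {p : ℝ} (hp : 2 < p)
    (hg : Integrable (fun z : ℝ × ℝ => ‖v z.2 - v z.1‖ ^ 2 / dT z.1 z.2 ^ p) muI)
    {x0 : ℝ} (hx0 : x0 ∈ I01) :
    ‖v x0‖ ≤ ‖∫ x in I01, v x‖ +
      √(2 ^ (p + 1) * ∫ z, ‖v z.2 - v z.1‖ ^ 2 / dT z.1 z.2 ^ p ∂muI) /
        (1 - (1 / 2 : ℝ) ^ ((p - 2) / 2)) := by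
  set G := ∫ z, ‖v z.2 - v z.1‖ ^ 2 / dT z.1 z.2 ^ p ∂muI with hG
  have hG0 : 0 ≤ G := integral_nonneg fun z =>
    div_nonneg (sq_nonneg _) (Real.rpow_nonneg (dT_nonneg _ _) _)
  obtain ⟨hx00, hx01⟩ := hx0
  let r : ℕ → ℝ := fun i => (1 / 2 : ℝ) ^ i
  have r0 : ∀ i, 0 < r i := fun i => by positivity
  have r1 : ∀ i, r i ≤ 1 := fun i => pow_le_one₀ (by norm_num) (by norm_num)
  let J : ℕ → Set ℝ := fun i => Ico (x0 * (1 - r i)) (x0 * (1 - r i) + r i)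
  have hJ : ∀ i, J i ⊆ I01 := by
    intro i
    refine Ico_subset_Ico (mul_nonneg hx00 (by linarith [r1 i])) ?_
    nlinarith [r1 i]
  have mJ : ∀ i, MeasurableSet (J i) := fun i => measurableSet_Ico
  have vJ : ∀ i, volume.real (J i) = r i := fun i => by
    simp only [J]
    rw [Real.volume_real_Ico_of_le (by linarith [r0 i])]; ring
  have dJ : ∀ i, ∀ x ∈ J i, |x - x0| ≤ r i := by
    intro i x hx
    obtain ⟨h1, h2⟩ := hx
    have := r0 i
    rw [abs_le]; constructor <;> nlinarith
  let A : ℕ → En n := fun i => (r i)⁻¹ • ∫ x in J i, v x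
  have hA0 : A 0 = ∫ x in I01, v x := by simp [A, J, r, I01]
  have rt : Tendsto r atTop (𝓝 0) :=
    tendsto_pow_atTop_nhds_zero_of_lt_one (by norm_num) (by norm_num)
  have hAt : Tendsto A atTop (𝓝 (v x0)) := by
    rw [Metric.tendsto_atTop']
    intro ε hε
    obtain ⟨δ, hδ, hδ'⟩ := Metric.continuousAt_iff.1 (hv.continuousAt (x := x0)) (ε / 2) (half_pos hε)
    have hev : ∀ᶠ i in atTop, r i < δ := rt.eventually (gt_mem_nhds hδ)
    obtain ⟨N, hN⟩ := eventually_atTop.1 hev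
    refine ⟨N, fun i hi => ?_⟩
    have hri := hN i hi.le
    have e : A i - v x0 = (r i)⁻¹ • ∫ x in J i, (v x - v x0) := by
      have i1 : Integrable v (volume.restrict (J i)) := cont_intOn hv (hJ i)
      have i2 : Integrable (fun _ : ℝ => v x0) (volume.restrict (J i)) :=
        cont_intOn continuous_const (hJ i)
      rw [integral_sub i1 i2, setIntegral_const, vJ, smul_sub, smul_smul,
        inv_mul_cancel₀ (r0 i).ne', one_smul]
    rw [dist_eq_norm, e, norm_smul, norm_inv, Real.norm_eq_abs, abs_of_pos (r0 i)]
    have fin : volume (J i) < ⊤ := by simp [J]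
    have := norm_setIntegral_le_of_norm_le_const (μ := volume) (f := fun x => v x - v x0)
      (C := ε / 2) fin (fun x hx => by
        have := hδ' (x := x) (by rw [Real.dist_eq]; exact (dJ i x hx).trans_lt hri)
        rw [dist_eq_norm] at this
        exact this.le)
    rw [vJ] at this
    calc (r i)⁻¹ * ‖∫ x in J i, (v x - v x0)‖ ≤ (r i)⁻¹ * (ε / 2 * r i) :=
          mul_le_mul_of_nonneg_left this (inv_nonneg.2 (r0 i).le)
      _ = ε / 2 := by field_simp [(r0 i).ne']
      _ < ε := half_lt_self hε
  set θ := (1 / 2 : ℝ) ^ ((p - 2) / 2) with hθ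
  have θ0 : 0 < θ := by positivity
  have θ1 : θ < 1 := Real.rpow_lt_one (by norm_num) (by norm_num) (by linarith)
  have key : ∀ i, dist (A i) (A (i + 1)) ≤ √(2 ^ (p + 1) * G) * θ ^ i := by
    intro i
    have h := avg_diff hv (by linarith) hg (hJ i) (hJ (i + 1)) (mJ i) (mJ (i + 1)) (r0 i)
      (r0 (i + 1)) (vJ i) (vJ (i + 1)) (L := 2 * r i) (fun x hx y hy => by
        have h1 := dJ i x hx
        have h2 := dJ (i + 1) y hy
        have h3 : r (i + 1) ≤ r i := pow_le_pow_of_le_one (by norm_num) (by norm_num) (Nat.le_succ i)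
        have h4 := abs_sub_le x x0 y
        rw [abs_sub_comm x0 y] at h4
        linarith)
    have e : (2 * r i) ^ p / (r i * r (i + 1)) = 2 ^ (p + 1) * (θ ^ i) ^ 2 := by
      have h1 : r (i + 1) = r i / 2 := by simp only [r]; rw [pow_succ]; ring
      have h2 : (θ ^ i) ^ 2 = r i ^ (p - 2) := by
        rw [← pow_mul, mul_comm, pow_mul, hθ, ← Real.rpow_mul_natCast (by norm_num)]
        simp only [r]
        rw [Real.rpow_pow_comm (by norm_num)]
        norm_num
      rw [h1, h2, Real.mul_rpow (by norm_num) (r0 i).le, Real.rpow_sub (r0 i),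
        Real.rpow_add (by norm_num)]
      have := (r0 i).ne'
      norm_num
      field_simp
    rw [e] at h
    rw [dist_eq_norm]
    refine (sq_le_sq₀ (norm_nonneg _) (by positivity)).1 (h.trans (le_of_eq ?_))
    rw [mul_pow, Real.sq_sqrt (by positivity)]
    ring
  have fin := dist_le_of_le_geometric_of_tendsto₀ θ _ θ1 key hAt
  rw [hA0, dist_eq_norm] at fin
  have := norm_sub_norm_le (v x0) (∫ x in I01, v x)
  rw [norm_sub_rev] at this
  linarith

abbrev E3 (n : ℕ) : Type := PiLp 2 (fun _ : Fin 3 => En n)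

def Fm {n : ℕ} (s : ℝ) (u : ℝ → En n) (z : ℝ × ℝ) : E3 n :=
  WithLp.toLp 2 ![u z.1, deriv u z.1,
    (√(dT z.1 z.2 ^ (2 * (s - 1) + 1)))⁻¹ • (deriv u z.2 - deriv u z.1)]

lemma Fm_inner {n : ℕ} (s : ℝ) (u v : ℝ → En n) (z : ℝ × ℝ) :
    ⟪Fm s u z, Fm s v z⟫ = ⟪u z.1, v z.1⟫ + ⟪deriv u z.1, deriv v z.1⟫ +
      ⟪deriv u z.2 - deriv u z.1, deriv v z.2 - deriv v z.1⟫ / dT z.1 z.2 ^ (2 * (s - 1) + 1) := by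
  have h : 0 ≤ dT z.1 z.2 ^ (2 * (s - 1) + 1) := Real.rpow_nonneg (dT_nonneg _ _) _
  rw [PiLp.inner_apply, Fin.sum_univ_three]
  simp only [Fm, Matrix.cons_val_zero, Matrix.cons_val_one, Matrix.cons_val]
  rw [real_inner_smul_left, real_inner_smul_right, ← mul_assoc, ← mul_inv, Real.mul_self_sqrt h]
  ring

lemma Fm_two_sq {n : ℕ} (s : ℝ) (u : ℝ → En n) (z : ℝ × ℝ) :
    ‖(Fm s u z).ofLp 2‖ ^ 2 = 
      ‖deriv u z.2 - deriv u z.1‖ ^ 2 / dT z.1 z.2 ^ (2 * (s - 1) + 1) := by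
  have h : 0 ≤ dT z.1 z.2 ^ (2 * (s - 1) + 1) := Real.rpow_nonneg (dT_nonneg _ _) _
  simp only [Fm, Matrix.cons_val]
  rw [norm_smul, mul_pow, norm_inv, Real.norm_eq_abs, abs_of_nonneg (Real.sqrt_nonneg _), inv_pow,
    Real.sq_sqrt h]
  ring

lemma memLp_cont {n : ℕ} {f : ℝ → En n} (hf : Continuous f) :
    MemLp (fun z : ℝ × ℝ => f z.1) 2 muI := by
  have c : Continuous fun z : ℝ × ℝ => f z.1 := by fun_prop
  rw [memLp_two_iff_integrable_sq_norm c.aestronglyMeasurable]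
  exact cont_intOn2 (c.norm.pow 2) le_rfl le_rfl

lemma meas_two {n : ℕ} (s : ℝ) {u : ℝ → En n} : 
    Measurable (fun z => (Fm s u z).ofLp 2) := by
  have c1 : Measurable (deriv u) := measurable_deriv _
  have := measurable_dT
  simp only [Fm, Matrix.cons_val]
  fun_prop

lemma memLp_iff {n : ℕ} (s : ℝ) {u : ℝ → En n} (hu : ContDiff ℝ 1 u) :
    MemLp (Fm s u) 2 muI ↔ gagliardoSqE (s - 1) (deriv u) < ⊤ := by
  have c1 : Measurable (deriv u) := measurable_deriv _
  have hm : Measurable (fun z : ℝ × ℝ => 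
      ‖deriv u z.2 - deriv u z.1‖ ^ 2 / dT z.1 z.2 ^ (2 * (s - 1) + 1)) := by
    have := measurable_dT
    fun_prop
  have e : gagliardoSqE (s - 1) (deriv u) = ∫⁻ z, ENNReal.ofReal 
      (‖deriv u z.2 - deriv u z.1‖ ^ 2 / dT z.1 z.2 ^ (2 * (s - 1) + 1)) ∂muI := by
    unfold muI gagliardoSqE
    rw [lintegral_prod _ (hm.ennreal_ofReal).aemeasurable]
  have e2 : MemLp (fun z => (Fm s u z).ofLp 2) 2 muI ↔ gagliardoSqE (s - 1) (deriv u) < ⊤ := by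
    rw [memLp_two_iff_integrable_sq_norm (meas_two s).aestronglyMeasurable, e]
    simp_rw [Fm_two_sq]
    rw [lt_top_iff_ne_top, lintegral_ofReal_ne_top_iff_integrable hm.aestronglyMeasurable]
    exact Eventually.of_forall fun z => 
      div_nonneg (sq_nonneg _) (Real.rpow_nonneg (dT_nonneg _ _) _)
  rw [memLp_piLp_iff, ← e2]
  refine ⟨fun h => h 2, fun h i => ?_⟩
  fin_cases i
  · exact memLp_cont hu.continuous
  · exact memLp_cont (hu.continuous_deriv le_rfl)
  · exact h

lemma Fm_add {n : ℕ} (s : ℝ) {u v : ℝ → En n} (hu : ContDiff ℝ 1 u) (hv : ContDiff ℝ 1 v) :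
    Fm s (u + v) = Fm s u + Fm s v := by
  have du := hu.differentiable one_ne_zero
  have dv := hv.differentiable one_ne_zero
  have hd : ∀ x, deriv (u + v) x = deriv u x + deriv v x := fun x => deriv_add (du x) (dv x)
  funext z
  refine PiLp.ext fun i => ?_
  fin_cases i
  · simp [Fm]
  · simp [Fm, hd]
  · simp only [Fm, hd, Pi.add_apply, PiLp.add_apply]
    simp only [Fin.reduceFinMk, Matrix.cons_val]
    rw [← smul_add]; congr 1; abel

lemma Fm_smul {n : ℕ} (s : ℝ) (c : ℝ) {u : ℝ → En n} (hu : ContDiff ℝ 1 u) :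
    Fm s (c • u) = c • Fm s u := by
  have du := hu.differentiable one_ne_zero
  have hd : ∀ x, deriv (c • u) x = c • deriv u x := fun x => deriv_const_smul c (du x)
  funext z
  refine PiLp.ext fun i => ?_
  fin_cases i
  · simp [Fm]
  · simp [Fm, hd]
  · simp only [Fm, hd, Pi.smul_apply, PiLp.smul_apply]
    simp only [Fin.reduceFinMk, Matrix.cons_val]
    rw [← smul_sub, smul_comm]

def Vs (n : ℕ) (s : ℝ) : Submodule ℝ (ℝ → En n) where
  carrier := {u | Function.Periodic u 1 ∧ ContDiff ℝ 1 u ∧ MemLp (Fm s u) 2 muI}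
  zero_mem' := by
    refine ⟨fun x => rfl, contDiff_const, ?_⟩
    have := Fm_smul s 0 (u := (0 : ℝ → En n)) contDiff_const
    rw [zero_smul, zero_smul] at this
    rw [this]
    exact MemLp.zero
  add_mem' := by
    rintro u v ⟨hu, hu1, hu2⟩ ⟨hv, hv1, hv2⟩
    refine ⟨hu.add hv, hu1.add hv1, ?_⟩
    rw [Fm_add s hu1 hv1]
    exact hu2.add hv2
  smul_mem' := by
    rintro c u ⟨hu, hu1, hu2⟩
    refine ⟨fun x => by simp [hu x], contDiff_const.smul hu1, ?_⟩
    rw [Fm_smul s c hu1]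
    exact hu2.const_smul c

lemma mem_Vs {n : ℕ} {s : ℝ} {u : ℝ → En n} : u ∈ Vs n s ↔ InHs s u := by
  constructor
  · rintro ⟨h1, h2, h3⟩
    exact ⟨h1, h2, (memLp_iff s h2).1 h3⟩
  · rintro ⟨h1, h2, h3⟩
    exact ⟨h1, h2, (memLp_iff s h2).2 h3⟩

def Jm (n : ℕ) (s : ℝ) : Vs n s →ₗ[ℝ] Lp (E3 n) 2 muI where
  toFun u := MemLp.toLp (Fm s u.1) u.2.2.2
  map_add' u v := by
    rw [← MemLp.toLp_add]
    exact MemLp.toLp_congr _ _ (by rw [Submodule.coe_add, Fm_add s u.2.2.1 v.2.2.1])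
  map_smul' c u := by
    rw [RingHom.id_apply, ← MemLp.toLp_const_smul]
    exact MemLp.toLp_congr _ _ (by rw [Submodule.coe_smul, Fm_smul s c u.2.2.1])

lemma Jm_coe {n : ℕ} {s : ℝ} (u : Vs n s) : (Jm n s u : ℝ × ℝ → E3 n) =ᵐ[muI] Fm s u.1 :=
  MemLp.coeFn_toLp u.2.2.2

lemma int_fst {f : ℝ → ℝ} : ∫ z, f z.1 ∂muI = ∫ x in I01, f x := by
  unfold muI
  rw [integral_fun_fst]; simp

lemma inner_integrable {n : ℕ} {f g : ℝ × ℝ → En n} (hf : MemLp f 2 muI) (hg : MemLp g 2 muI) :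
    Integrable (fun z => ⟪f z, g z⟫) muI := by
  have := L2.integrable_inner (𝕜 := ℝ) (hf.toLp f) (hg.toLp g)
  refine this.congr ?_
  filter_upwards [hf.coeFn_toLp, hg.coeFn_toLp] with z h1 h2
  rw [h1, h2]

lemma Jm_inner {n : ℕ} {s : ℝ} (u v : Vs n s) : ⟪Jm n s u, Jm n s v⟫ = HsInner s u.1 v.1 := by
  have e : ⟪Jm n s u, Jm n s v⟫ = ∫ z, ⟪Fm s u.1 z, Fm s v.1 z⟫ ∂muI := by
    rw [L2.inner_def]
    refine integral_congr_ae ?_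
    filter_upwards [Jm_coe u, Jm_coe v] with z h1 h2
    rw [h1, h2]
  rw [e]
  simp_rw [Fm_inner]
  have hu := memLp_piLp_iff.1 u.2.2.2
  have hv := memLp_piLp_iff.1 v.2.2.2
  have i0 : Integrable (fun z : ℝ × ℝ => ⟪u.1 z.1, v.1 z.1⟫) muI := inner_integrable (hu 0) (hv 0)
  have i1 : Integrable (fun z : ℝ × ℝ => ⟪deriv u.1 z.1, deriv v.1 z.1⟫) muI :=
    inner_integrable (hu 1) (hv 1)
  have i2 : Integrable (fun z : ℝ × ℝ => ⟪deriv u.1 z.2 - deriv u.1 z.1,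
      deriv v.1 z.2 - deriv v.1 z.1⟫ / dT z.1 z.2 ^ (2 * (s - 1) + 1)) muI := by
    refine (inner_integrable (hu 2) (hv 2)).congr (Eventually.of_forall fun z => ?_)
    have h : 0 ≤ dT z.1 z.2 ^ (2 * (s - 1) + 1) := Real.rpow_nonneg (dT_nonneg _ _) _
    simp only [Fm, Matrix.cons_val]
    rw [real_inner_smul_left, real_inner_smul_right, ← mul_assoc, ← mul_inv, Real.mul_self_sqrt h]
    ring
  have i01 : Integrable (fun z : ℝ × ℝ => ⟪u.1 z.1, v.1 z.1⟫ + ⟪deriv u.1 z.1, deriv v.1 z.1⟫) muI :=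
    i0.add i1
  rw [integral_add i01 i2, integral_add i0 i1, int_fst (f := fun x => ⟪u.1 x, v.1 x⟫),
    int_fst (f := fun x => ⟪deriv u.1 x, deriv v.1 x⟫)]
  unfold HsInner
  congr 1
  exact integral_prod _ i2

lemma comp_le {n : ℕ} {s : ℝ} (u : Vs n s) (i : Fin 3) :
    ∫ z, ‖(Fm s u.1 z).ofLp i‖ ^ 2 ∂muI ≤ ‖Jm n s u‖ ^ 2 := by
  have e : ‖Jm n s u‖ ^ 2 = ∫ z, ‖Fm s u.1 z‖ ^ 2 ∂muI := by
    rw [← real_inner_self_eq_norm_sq, L2.inner_def]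
    refine integral_congr_ae ?_
    filter_upwards [Jm_coe u] with z h1
    rw [h1, real_inner_self_eq_norm_sq]
  have hi := memLp_piLp_iff.1 u.2.2.2 i
  rw [e]
  refine integral_mono ((memLp_two_iff_integrable_sq_norm hi.1).1 hi)
    ((memLp_two_iff_integrable_sq_norm u.2.2.2.1).1 u.2.2.2) fun z => ?_
  exact pow_le_pow_left₀ (norm_nonneg _) (PiLp.norm_apply_le (Fm s u.1 z) i) 2

lemma per_I01 {n : ℕ} {f : ℝ → En n} (h : Function.Periodic f 1) {B : ℝ}
    (hb : ∀ x ∈ I01, ‖f x‖ ≤ B) (x : ℝ) : ‖f x‖ ≤ B := by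
  have e : f x = f (Int.fract x) := by
    have := h.sub_int_mul_eq (x := x) ⌊x⌋
    rw [mul_one] at this
    exact this.symm
  rw [e]
  exact hb _ ⟨Int.fract_nonneg x, Int.fract_lt_one x⟩

lemma int_norm_le {n : ℕ} {f : ℝ → En n} (hf : Continuous f) {B : ℝ} (hB : 0 ≤ B)
    (h : ∫ z, ‖f z.1‖ ^ 2 ∂muI ≤ B ^ 2) : ‖∫ x in I01, f x‖ ≤ B := by
  rw [int_fst (f := fun x => ‖f x‖ ^ 2)] at h
  have := cs_int (volume.restrict I01) f (cont_intOn hf le_rfl) (cont_intOn (hf.norm.pow 2) le_rfl)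
  rw [probReal_univ, one_mul] at this
  exact (sq_le_sq₀ (norm_nonneg _) hB).1 (this.trans h)

lemma sob {n : ℕ} {s : ℝ} (hs : 3 / 2 < s) : ∃ C : ℝ, 0 ≤ C ∧ ∀ u : Vs n s, ∀ x,
    ‖u.1 x‖ ≤ C * ‖Jm n s u‖ ∧ ‖deriv u.1 x‖ ≤ C * ‖Jm n s u‖ := by
  set p := 2 * (s - 1) + 1 with hp
  have hp2 : 2 < p := by rw [hp]; linarith
  set θ := (1 / 2 : ℝ) ^ ((p - 2) / 2) with hθ
  have θ1 : θ < 1 := Real.rpow_lt_one (by norm_num) (by norm_num) (by linarith)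
  set C := 1 + √(2 ^ (p + 1)) / (1 - θ) with hC
  have hC0 : 0 ≤ C := by
    have : 0 ≤ √(2 ^ (p + 1)) / (1 - θ) := div_nonneg (Real.sqrt_nonneg _) (by linarith)
    linarith
  have hd : ∀ u : Vs n s, ∀ x, ‖deriv u.1 x‖ ≤ C * ‖Jm n s u‖ := by
    intro u
    have cd : Continuous (deriv u.1) := u.2.2.1.continuous_deriv le_rfl
    refine per_I01 (periodic_deriv' u.2.1) fun x hx => ?_
    have hi := memLp_piLp_iff.1 u.2.2.2 2
    have hg := (memLp_two_iff_integrable_sq_norm hi.1).1 hi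
    have h2 := comp_le u 2
    simp_rw [Fm_two_sq] at hg h2
    have h := morrey_one cd hp2 hg hx
    have h1 : ‖∫ x in I01, deriv u.1 x‖ ≤ ‖Jm n s u‖ := int_norm_le cd (norm_nonneg _) (comp_le u 1)
    have h3 : √(2 ^ (p + 1) * ∫ z, ‖deriv u.1 z.2 - deriv u.1 z.1‖ ^ 2 / dT z.1 z.2 ^ p ∂muI) ≤
        √(2 ^ (p + 1)) * ‖Jm n s u‖ := by
      rw [Real.sqrt_mul (by positivity)]
      exact mul_le_mul_of_nonneg_left (Real.sqrt_le_iff.2 ⟨norm_nonneg _, h2⟩) (Real.sqrt_nonneg _)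
    have h4 := div_le_div_of_nonneg_right h3 (sub_nonneg.2 θ1.le)
    calc ‖deriv u.1 x‖ ≤ _ := h
      _ ≤ ‖Jm n s u‖ + √(2 ^ (p + 1)) * ‖Jm n s u‖ / (1 - θ) := add_le_add h1 h4
      _ = C * ‖Jm n s u‖ := by rw [hC]; ring
  refine ⟨C + 1, by linarith, fun u x => ⟨?_, ?_⟩⟩
  · revert x
    refine per_I01 u.2.1 fun x hx => ?_
    have cu : Continuous u.1 := u.2.2.1.continuous
    have h1 : ‖∫ x in I01, u.1 x‖ ≤ ‖Jm n s u‖ := int_norm_le cu (norm_nonneg _) (comp_le u 0)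
    have e : u.1 x - ∫ y in I01, u.1 y = ∫ y in I01, (u.1 x - u.1 y) := by
      have i1 : Integrable (fun _ : ℝ => u.1 x) (volume.restrict I01) := integrable_const _
      have i2 : Integrable u.1 (volume.restrict I01) := cont_intOn cu le_rfl
      rw [integral_sub i1 i2, integral_const, probReal_univ, one_smul]
    have fin : volume I01 < ⊤ := by simp [I01]
    have h2 := norm_setIntegral_le_of_norm_le_const (μ := volume) (f := fun y => u.1 x - u.1 y)
      (C := C * ‖Jm n s u‖) fin (fun y hy => by
        have := Convex.norm_image_sub_le_of_norm_deriv_le (𝕜 := ℝ) (f := u.1) (s := univ)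
          (x := y) (y := x) (C := C * ‖Jm n s u‖)
          (fun z _ => u.2.2.1.differentiable one_ne_zero z) (fun z _ => hd u z) convex_univ
          (mem_univ _) (mem_univ _)
        refine this.trans (mul_le_of_le_one_right (by positivity) ?_)
        rw [Real.norm_eq_abs, abs_le]
        constructor <;> linarith [hx.1, hx.2, hy.1, hy.2])
    rw [← e, show volume.real I01 = 1 by simp [I01], mul_one] at h2
    have h3 := norm_sub_norm_le (u.1 x) (∫ y in I01, u.1 y)
    linarith
  · have := hd u x
    have := norm_nonneg (Jm n s u)
    linarith

lemma range_closed {n : ℕ} {s : ℝ} (hs : 3 / 2 < s) :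
    IsClosed (LinearMap.range (Jm n s) : Set (Lp (E3 n) 2 muI)) := by
  obtain ⟨C, hC, hb⟩ := sob (n := n) hs
  refine IsSeqClosed.isClosed fun U w hU hw => ?_
  choose u hu using hU
  have hu' : ∀ k, Jm n s (u k) = U k := hu
  have hcau : CauchySeq U := hw.cauchySeq
  have hsub : ∀ k l, ‖Jm n s (u k - u l)‖ = dist (U k) (U l) := fun k l => by
    rw [map_sub, hu', hu', dist_eq_norm]
  have dsub : ∀ k l x, deriv ((u k - u l : Vs n s) : ℝ → En n) x =
      deriv (u k).1 x - deriv (u l).1 x := fun k l x =>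
    deriv_sub ((u k).2.2.1.differentiable one_ne_zero x) ((u l).2.2.1.differentiable one_ne_zero x)
  have d0 : ∀ k l x, dist ((u k).1 x) ((u l).1 x) ≤ C * dist (U k) (U l) := fun k l x => by
    have := (hb (u k - u l) x).1
    rw [hsub] at this
    rw [dist_eq_norm]
    exact this
  have d1 : ∀ k l x, dist (deriv (u k).1 x) (deriv (u l).1 x) ≤ C * dist (U k) (U l) :=
    fun k l x => by
      have := (hb (u k - u l) x).2
      rw [hsub, dsub] at this
      rw [dist_eq_norm]
      exact this
  have uc : ∀ f : ℕ → ℝ → En n, (∀ k l x, dist (f k x) (f l x) ≤ C * dist (U k) (U l)) →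
      ∃ g : ℝ → En n, TendstoUniformly f g atTop := by
    intro f hf
    have h1 : UniformCauchySeqOn f atTop univ := by
      rw [Metric.uniformCauchySeqOn_iff]
      intro ε hε
      obtain ⟨N, hN⟩ := Metric.cauchySeq_iff.1 hcau (ε / (C + 1)) (by positivity)
      refine ⟨N, fun k hk l hl x _ => (hf k l x).trans_lt ?_⟩
      have := hN k hk l hl
      rw [lt_div_iff₀ (by linarith)] at this
      nlinarith [dist_nonneg (x := U k) (y := U l)]
    have h2 : ∀ x, ∃ y, Tendsto (fun k => f k x) atTop (𝓝 y) := fun x =>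
      cauchySeq_tendsto_of_complete (h1.cauchySeq (mem_univ x))
    choose g hg using h2
    exact ⟨g, tendstoUniformlyOn_univ.1 (h1.tendstoUniformlyOn_of_tendsto fun x _ => hg x)⟩
  obtain ⟨g0, hg0⟩ := uc (fun k => (u k).1) d0
  obtain ⟨g1, hg1⟩ := uc (fun k => deriv (u k).1) d1
  have hder : ∀ x, HasDerivAt g0 (g1 x) x :=
    hasDerivAt_of_tendstoUniformly hg1
      (Eventually.of_forall fun k x => ((u k).2.2.1.differentiable one_ne_zero x).hasDerivAt)
      (fun x => hg0.tendsto_at x)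
  have hde : deriv g0 = g1 := funext fun x => (hder x).deriv
  have hc1 : Continuous g1 :=
    hg1.continuous (Frequently.of_forall fun k => (u k).2.2.1.continuous_deriv le_rfl)
  have hcd : ContDiff ℝ 1 g0 := by
    rw [contDiff_one_iff_deriv]
    exact ⟨fun x => (hder x).differentiableAt, hde ▸ hc1⟩
  have hper : Function.Periodic g0 1 := fun x => by
    refine tendsto_nhds_unique (hg0.tendsto_at (x + 1)) ?_
    have := hg0.tendsto_at x
    refine this.congr fun k => ((u k).2.1 x).symm
  have hpt : ∀ z, Tendsto (fun k => Fm s (u k).1 z) atTop (𝓝 (Fm s g0 z)) := by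
    intro z
    unfold Fm
    refine ((PiLp.continuous_toLp 2 _).tendsto _).comp (tendsto_pi_nhds.2 fun i => ?_)
    have t1 : ∀ x, Tendsto (fun k => deriv (u k).1 x) atTop (𝓝 (deriv g0 x)) := fun x => by
      rw [hde]; exact hg1.tendsto_at x
    fin_cases i
    · exact hg0.tendsto_at z.1
    · exact t1 z.1
    · exact ((t1 z.2).sub (t1 z.1)).const_smul _
  obtain ⟨ns, hns, hae⟩ := (tendstoInMeasure_of_tendsto_Lp hw).exists_seq_tendsto_ae
  have hall : ∀ᵐ z ∂muI, ∀ k, (U k : ℝ × ℝ → E3 n) z = Fm s (u k).1 z :=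
    ae_all_iff.2 fun k => by rw [← hu' k]; exact Jm_coe (u k)
  have hw' : (w : ℝ × ℝ → E3 n) =ᵐ[muI] Fm s g0 := by
    filter_upwards [hae, hall] with z h1 h2
    simp only [h2] at h1
    exact tendsto_nhds_unique h1 ((hpt z).comp hns.tendsto_atTop)
  have hmem : MemLp (Fm s g0) 2 muI := (memLp_congr_ae hw').1 (Lp.memLp w)
  refine ⟨⟨g0, hper, hcd, hmem⟩, ?_⟩
  refine Lp.ext ((Jm_coe _).trans hw'.symm)

lemma riesz {n : ℕ} {s : ℝ} (hs : 3 / 2 < s) (ℓ : Vs n s →ₗ[ℝ] ℝ) (C : ℝ)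
    (hℓ : ∀ u, ‖ℓ u‖ ≤ C * ‖Jm n s u‖) : ∃ v : Vs n s, ∀ u, ℓ u = HsInner s u.1 v.1 := by
  obtain ⟨C', _, hb⟩ := sob (n := n) hs
  have hinj : Function.Injective (Jm n s) := by
    rw [injective_iff_map_eq_zero]
    intro u hu
    refine Subtype.ext (funext fun x => ?_)
    have := (hb u x).1
    rw [hu, norm_zero, mul_zero] at this
    simpa using this
  let e := LinearEquiv.ofInjective (Jm n s) hinj
  have : CompleteSpace (LinearMap.range (Jm n s)) := (range_closed hs).completeSpace_coe
  have he : ∀ x : LinearMap.range (Jm n s), Jm n s (e.symm x) = (x : Lp (E3 n) 2 muI) := fun x => by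
    have := e.apply_symm_apply x
    exact congrArg Subtype.val this
  let f : LinearMap.range (Jm n s) →L[ℝ] ℝ := (ℓ.comp e.symm.toLinearMap).mkContinuous C (fun x => by
    have := hℓ (e.symm x)
    rw [he] at this
    exact this)
  let w := (InnerProductSpace.toDual ℝ (LinearMap.range (Jm n s))).symm f
  refine ⟨e.symm w, fun u => ?_⟩
  rw [← Jm_inner, he]
  have h1 : ⟪w, e u⟫ = f (e u) := InnerProductSpace.toDual_symm_apply
  have h2 : f (e u) = ℓ u := by
    change ℓ (e.symm (e u)) = ℓ u
    rw [e.symm_apply_apply]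
  rw [← h2, ← h1, real_inner_comm]
  rfl

lemma part_weak {n : ℕ} (s : ℝ) (hs : 3 / 2 < s) (γk : ℕ → ℝ → En n) (γ : ℝ → En n)
    (hk : ∀ k, InM s (γk k)) (hγ : InM s γ) (h : WeakHsTendsto s γk γ) :
    EtpE s γ ≤ Filter.liminf (fun k => EtpE s (γk k)) atTop := by
  obtain ⟨C, hC, hb⟩ := sob (n := n) hs
  have gen : ∀ (ℓ : Vs n s →ₗ[ℝ] ℝ), (∀ u, ‖ℓ u‖ ≤ C * ‖Jm n s u‖) →
      Tendsto (fun k => ℓ ⟨γk k, mem_Vs.2 (hk k).1⟩) atTop (𝓝 (ℓ ⟨γ, mem_Vs.2 hγ.1⟩)) := by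
    intro ℓ hℓ
    obtain ⟨v, hv⟩ := riesz hs ℓ C hℓ
    simp only [hv]
    exact h v.1 (mem_Vs.1 v.2)
  have coord : ∀ (f : ℕ → En n) (g : En n), (∀ i, Tendsto (fun k => f k i) atTop (𝓝 (g i))) →
      Tendsto f atTop (𝓝 g) := fun f g hfg =>
    ((PiLp.continuous_toLp 2 (fun _ : Fin n => ℝ)).tendsto g.ofLp).comp
      (tendsto_pi_nhds.2 hfg : Tendsto (fun k => (f k).ofLp) atTop (𝓝 g.ofLp))
  refine fatou_main s γk γ hk hγ (fun x => coord _ _ fun i => ?_) (fun x => coord _ _ fun i => ?_)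
  · exact gen
      { toFun := fun u => u.1 x i
        map_add' := fun u v => by simp
        map_smul' := fun c u => by simp }
      (fun u => (PiLp.norm_apply_le (u.1 x) i).trans (hb u x).1)
  · exact gen
      { toFun := fun u => deriv u.1 x i
        map_add' := fun u v => by
          have : deriv ((u + v : Vs n s) : ℝ → En n) x = deriv u.1 x + deriv v.1 x :=
            deriv_add (u.2.2.1.differentiable one_ne_zero x) (v.2.2.1.differentiable one_ne_zero x)
          rw [this]; rfl
        map_smul' := fun c u => by
          have : deriv ((c • u : Vs n s) : ℝ → En n) x = c • deriv u.1 x :=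
            deriv_const_smul c (u.2.2.1.differentiable one_ne_zero x)
          rw [this]; rfl }
      (fun u => (PiLp.norm_apply_le (deriv u.1 x) i).trans (hb u x).2)

/-- sequential lower semicontinuity of `E`: if `γ_k ∈ 𝓜` converge to
`γ ∈ 𝓜` weakly in `H^s(𝕋,ℝⁿ)`, then `E(γ) ≤ liminf_k E(γ_k)`; likewise if `γ_k → γ`
in `C¹(𝕋,ℝⁿ)`. -/
theorem statement15 (s : ℝ) (hs : s ∈ Set.Ioo (3 / 2 : ℝ) 2) (n : ℕ) (hn : 2 ≤ n) :
    (∀ (γk : ℕ → ℝ → En n) (γ : ℝ → En n), (∀ k, InM s (γk k)) → InM s γ →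
      WeakHsTendsto s γk γ →
      EtpE s γ ≤ Filter.liminf (fun k => EtpE s (γk k)) atTop) ∧
    (∀ (γk : ℕ → ℝ → En n) (γ : ℝ → En n), (∀ k, InM s (γk k)) → InM s γ →
      Tendsto (fun k => supNorm (fun x => γk k x - γ x) +
        supNorm (fun x => deriv (γk k) x - deriv γ x)) atTop (𝓝 0) →
      EtpE s γ ≤ Filter.liminf (fun k => EtpE s (γk k)) atTop) := by
  exact ⟨fun γk γ hk hγ h => part_weak s hs.1 γk γ hk hγ h,
    fun γk γ hk hγ h => part_C1 s γk γ hk hγ h⟩
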